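/- Let (p_n) be the sequence of numerators of the convergents of the continued fraction expansion √2 = [1;2,2,2,…], i.e., p_1 = 1, p_2 = 3, and p_n = 2·p_{n-1} + p_{n-2} for n ≥ 3. Then for every integer n ≥ 1, the number of non-decreasing vacillating parking functions of length n equals p_n: |VPF_n^↑| = p_n. -/

import Mathlib

/-- One car with (1-indexed) preference `p` attempts to park on a one-way street with
spots `1,…,n` under the `k`-vacillating rule, given the set `occ` of occupied spots:
it parks in spot `p` if unoccupied; otherwise in spot `p - k` if `p - k ≥ 1` and it is
unoccupied; otherwise in spot `p + k` if `p + k ≤ n` and it is unoccupied; otherwise it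
fails to park (`none`). -/
def parkStep (n k : ℕ) (occ : Finset ℕ) (p : ℕ) : Option ℕ :=
  if p ∉ occ then some p
  else if k < p ∧ p - k ∉ occ then some (p - k)
  else if p + k ≤ n ∧ p + k ∉ occ then some (p + k)
  else none

/-- Park the cars whose preference list is given, in order, under the `k`-vacillating
rule on a street with spots `1,…,n`, starting from occupied set `occ`.  Returns the list
of spots occupied by the cars (in the order the cars arrive), or `none` if some car
fails to park. -/
def parkAssign (n k : ℕ) (occ : Finset ℕ) : List ℕ → Option (List ℕ)
  | [] => some []
  | p :: ps =>
    match parkStep n k occ p with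
    | none => none
    | some s => (parkAssign n k (insert s occ) ps).map (s :: ·)

/-- The 1-indexed preference list in `[n]^m` associated to `α : Fin m → Fin n`
(car `i+1` prefers spot `α i + 1`). -/
def prefList {m n : ℕ} (α : Fin m → Fin n) : List ℕ :=
  List.ofFn fun i => (α i : ℕ) + 1

/-- The set of `k`-vacillating parking functions of length `n`:
preference lists in `[n]^n` (encoded as `Fin n → Fin n`) for which all `n` cars park. -/
def VPFk (n k : ℕ) : Finset (Fin n → Fin n) :=
  Finset.univ.filter fun α => (parkAssign n k ∅ (prefList α)).isSome

/-- The set of vacillating parking functions of length `n` (the case `k = 1`). -/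
def VPF (n : ℕ) : Finset (Fin n → Fin n) := VPFk n 1

/-- The set of non-decreasing vacillating parking functions of length `n`. -/
def VPFup (n : ℕ) : Finset (Fin n → Fin n) :=
  (VPF n).filter fun α => ∀ i j : Fin n, i ≤ j → α i ≤ α j

/-- The non-decreasing lists of `r` preferences that fill up the spots `m + 1, …, m + r` when
exactly the spots `1, …, m` are occupied: either the first car prefers `m` (if `m ≥ 1`) or `m + 1`
and parks in `m + 1`, or the first two cars prefer `m + 2` and park in `m + 2` and `m + 1`. -/
def fillingLists : ℕ → ℕ → Finset (List ℕ)
  | 0, _ => {[]}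
  | 1, m => (Finset.Icc (max m 1) (m + 1)).image fun a => [a]
  | r + 2, m =>
    (Finset.Icc (max m 1) (m + 1) ×ˢ fillingLists (r + 1) (m + 1)).image (fun x => x.1 :: x.2) ∪
      (fillingLists r (m + 2)).image fun l => (m + 2) :: (m + 2) :: l

/-- The Pell numbers, shifted to start with `1, 2, 5`. -/
def shiftedPell : ℕ → ℕ
  | 0 => 1
  | 1 => 2
  | r + 2 => 2 * shiftedPell (r + 1) + shiftedPell r

theorem card_fillingLists_add_two (r m : ℕ) :
    (fillingLists (r + 2) m).card =
      (Finset.Icc (max m 1) (m + 1)).card * (fillingLists (r + 1) (m + 1)).card +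
        (fillingLists r (m + 2)).card := by
  rw [fillingLists, Finset.card_union_of_disjoint, Finset.card_image_of_injective,
    Finset.card_image_of_injective, Finset.card_product]
  · intro a b h
    simpa using h
  · rintro ⟨a, b⟩ ⟨c, d⟩ h
    simpa using h
  · rw [Finset.disjoint_left]
    intro l h h'
    simp only [Finset.mem_image, Finset.mem_product, Finset.mem_Icc] at h h'
    obtain ⟨x, ⟨hx, -⟩, rfl⟩ := h
    obtain ⟨t, -, ht⟩ := h'
    have := (List.cons.inj ht).1
    omega

theorem card_fillingLists_succ (r m : ℕ) : (fillingLists r (m + 1)).card = shiftedPell r := by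
  induction r using Nat.twoStepInduction generalizing m with
  | zero => simp [fillingLists, shiftedPell]
  | one =>
    rw [fillingLists, Finset.card_image_of_injective _ fun a b h => by simpa using h]
    simp [shiftedPell]
  | more r ih ih' =>
    rw [card_fillingLists_add_two, ih', show m + 1 + 2 = m + 2 + 1 by ring, ih]
    simp [shiftedPell]

/-- Every list in `fillingLists r m` is non-decreasing, of length `r`, with entries in
`[max m 1, m + r]`. -/
theorem of_mem_fillingLists {r m : ℕ} {l : List ℕ} (h : l ∈ fillingLists r m) :
    l.length = r ∧ l.Pairwise (· ≤ ·) ∧ ∀ a ∈ l, m ≤ a ∧ 1 ≤ a ∧ a ≤ m + r := by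
  induction r using Nat.twoStepInduction generalizing m l with
  | zero => simp_all [fillingLists]
  | one =>
    simp only [fillingLists, Finset.mem_image, Finset.mem_Icc] at h
    obtain ⟨a, ha, rfl⟩ := h
    simp
    omega
  | more r ih ih' =>
    simp only [fillingLists, Finset.mem_union, Finset.mem_image, Finset.mem_product,
      Finset.mem_Icc] at h
    rcases h with ⟨⟨a, t⟩, ⟨ha, ht⟩, rfl⟩ | ⟨t, ht, rfl⟩
    · obtain ⟨h1, h2, h3⟩ := ih' ht
      simp only [List.length_cons, List.pairwise_cons, List.mem_cons]
      simp only at ha h1 h2 h3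
      refine ⟨by omega, ⟨fun b hb => ?_, h2⟩, ?_⟩
      · have := h3 b hb
        omega
      · rintro b (rfl | hb)
        · omega
        · have := h3 b hb
          omega
    · obtain ⟨h1, h2, h3⟩ := ih ht
      simp only [List.length_cons, List.pairwise_cons, List.mem_cons]
      refine ⟨by omega, ⟨?_, fun b hb => (h3 b hb).1, h2⟩, ?_⟩
      · rintro b (rfl | hb)
        · exact le_rfl
        · exact (h3 b hb).1
      · rintro b (rfl | rfl | hb)
        · omega
        · omega
        · have := h3 b hb
          omega

theorem parkAssign_cons_isSome {n k : ℕ} {occ : Finset ℕ} {a : ℕ} {l : List ℕ} :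
    (parkAssign n k occ (a :: l)).isSome ↔
      ∃ s, parkStep n k occ a = some s ∧ (parkAssign n k (insert s occ) l).isSome := by
  rw [parkAssign]
  cases parkStep n k occ a <;> simp

/-- If all preferences exceed `s + 1`, then spot `s` stays empty, so the cars must fit into the
other spots. -/
theorem card_add_length_lt_of_isSome {n s : ℕ} (hs : 1 ≤ s) (hsn : s ≤ n) {l : List ℕ}
    {occ : Finset ℕ} (hocc : occ ⊆ (Finset.Icc 1 n).erase s)
    (hl : ∀ a ∈ l, s + 1 < a ∧ a ≤ n) (h : (parkAssign n 1 occ l).isSome) :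
    occ.card + l.length < n := by
  induction l generalizing occ with
  | nil =>
    have h1 := Finset.card_le_card hocc
    rw [Finset.card_erase_of_mem (by simp; omega), Nat.card_Icc] at h1
    simp
    omega
  | cons a t ih =>
    obtain ⟨x, hx, ht⟩ := parkAssign_cons_isSome.1 h
    have ha := hl a (by simp)
    have hx' : x ∉ occ ∧ x ≠ s ∧ 1 ≤ x ∧ x ≤ n := by
      unfold parkStep at hx
      split_ifs at hx with h1 h2 h3 <;> cases hx
      · exact ⟨h2.2, by omega⟩
      · exact ⟨h3.2, by omega⟩
      · exact ⟨h1, by omega⟩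
    have := ih (Finset.insert_subset (by simp; omega) hocc)
      (fun b hb => hl b (by simp [hb])) ht
    rw [Finset.card_insert_of_notMem hx'.1] at this
    simp only [List.length_cons]
    omega

theorem insert_succ_Icc_one (m : ℕ) :
    insert (m + 1) (Finset.Icc 1 m) = Finset.Icc 1 (m + 1) := by
  ext x
  simp
  omega

theorem parkStep_Icc_of_lt {n m a : ℕ} (h : m < a) :
    parkStep n 1 (Finset.Icc 1 m) a = some a := by
  simp [parkStep]
  omega

theorem parkStep_Icc_self {n m : ℕ} (hm : 1 ≤ m) (h : m < n) :
    parkStep n 1 (Finset.Icc 1 m) m = some (m + 1) := by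
  have h1 : ¬ (1 < m ∧ m - 1 ∉ Finset.Icc 1 m) := by simp; omega
  have h2 : m + 1 ≤ n ∧ m + 1 ∉ Finset.Icc 1 m := by simp; omega
  have h3 : ¬ m ∉ Finset.Icc 1 m := by simp; omega
  rw [parkStep, if_neg h3, if_neg h1, if_pos h2]

theorem parkStep_Icc_eq_none {n m a : ℕ} (ha : 1 ≤ a) (h : a < m) :
    parkStep n 1 (Finset.Icc 1 m) a = none := by
  have h1 : ¬ (1 < a ∧ a - 1 ∉ Finset.Icc 1 m) := by simp; omega
  have h2 : ¬ (a + 1 ≤ n ∧ a + 1 ∉ Finset.Icc 1 m) := by simp; omega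
  have h3 : ¬ a ∉ Finset.Icc 1 m := by simp; omega
  rw [parkStep, if_neg h3, if_neg h1, if_neg h2]

theorem parkStep_insert_Icc (n m : ℕ) :
    parkStep n 1 (insert (m + 2) (Finset.Icc 1 m)) (m + 2) = some (m + 1) := by
  simp [parkStep]

theorem insert_insert_Icc_one (m : ℕ) :
    insert (m + 1) (insert (m + 2) (Finset.Icc 1 m)) = Finset.Icc 1 (m + 2) := by
  ext x
  simp
  omega

theorem parkAssign_cons_isSome_of_mem_Icc {n m a : ℕ} {l : List ℕ}
    (ha : a ∈ Finset.Icc (max m 1) (m + 1)) (hmn : m < n) :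
    (parkAssign n 1 (Finset.Icc 1 m) (a :: l)).isSome ↔
      (parkAssign n 1 (Finset.Icc 1 (m + 1)) l).isSome := by
  have hstep : parkStep n 1 (Finset.Icc 1 m) a = some (m + 1) := by
    simp only [Finset.mem_Icc] at ha
    obtain rfl | rfl : a = m ∨ a = m + 1 := by omega
    · exact parkStep_Icc_self (by omega) hmn
    · exact parkStep_Icc_of_lt (by omega)
  simp [parkAssign_cons_isSome, hstep, insert_succ_Icc_one]

theorem parkAssign_isSome_of_mem_fillingLists {r m n : ℕ} (hn : m + r ≤ n) {l : List ℕ}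
    (h : l ∈ fillingLists r m) : (parkAssign n 1 (Finset.Icc 1 m) l).isSome := by
  induction r using Nat.twoStepInduction generalizing m l with
  | zero => simp_all [fillingLists, parkAssign]
  | one =>
    simp only [fillingLists, Finset.mem_image] at h
    obtain ⟨a, ha, rfl⟩ := h
    rw [parkAssign_cons_isSome_of_mem_Icc ha (by omega)]
    simp [parkAssign]
  | more r ih ih' =>
    simp only [fillingLists, Finset.mem_union, Finset.mem_image, Finset.mem_product] at h
    rcases h with ⟨⟨a, t⟩, ⟨ha, ht⟩, rfl⟩ | ⟨t, ht, rfl⟩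
    · rw [parkAssign_cons_isSome_of_mem_Icc ha (by omega)]
      exact ih' (by omega) ht
    · refine parkAssign_cons_isSome.2 ⟨m + 2, parkStep_Icc_of_lt (by omega),
        parkAssign_cons_isSome.2 ⟨m + 1, parkStep_insert_Icc n m, ?_⟩⟩
      rw [insert_insert_Icc_one]
      exact ih (by omega) ht

theorem mem_fillingLists_of_parkAssign_isSome {r m n : ℕ} (hn : m + r = n) {l : List ℕ}
    (hlen : l.length = r) (hsort : l.Pairwise (· ≤ ·)) (hl : ∀ a ∈ l, 1 ≤ a ∧ a ≤ n)
    (h : (parkAssign n 1 (Finset.Icc 1 m) l).isSome) : l ∈ fillingLists r m := by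
  induction r using Nat.twoStepInduction generalizing m l with
  | zero => simp_all [fillingLists]
  | one =>
    obtain ⟨a, rfl⟩ := List.length_eq_one_iff.1 hlen
    obtain ⟨s, hs, -⟩ := parkAssign_cons_isSome.1 h
    have ha := hl a (by simp)
    have hma : m ≤ a := by
      by_contra! hlt
      simp [parkStep_Icc_eq_none ha.1 hlt] at hs
    simp [fillingLists]
    omega
  | more r ih ih' =>
    obtain ⟨a, b, t, rfl⟩ : ∃ a b t, l = a :: b :: t := by
      match l, hlen with
      | a :: b :: t, _ => exact ⟨a, b, t, rfl⟩
    have ha := hl a (by simp)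
    have hb := hl b (by simp)
    obtain ⟨s, hs, hrest⟩ := parkAssign_cons_isSome.1 h
    have hma : m ≤ a := by
      by_contra! hlt
      simp [parkStep_Icc_eq_none ha.1 hlt] at hs
    have htail := (List.pairwise_cons.1 hsort).2
    have hab := (List.pairwise_cons.1 hsort).1 b (by simp)
    have hbt := (List.pairwise_cons.1 htail).1
    simp only [List.length_cons] at hlen
    simp only [fillingLists, Finset.mem_union, Finset.mem_image, Finset.mem_product]
    by_cases ham : a ≤ m + 1
    · have ha' : a ∈ Finset.Icc (max m 1) (m + 1) := by simp; omega
      rw [parkAssign_cons_isSome_of_mem_Icc ha' (by omega)] at h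
      exact .inl ⟨(a, b :: t), ⟨ha', ih' (by omega) (by simp; omega) htail
        (fun c hc => hl c (by simp [List.mem_cons.1 hc])) h⟩, rfl⟩
    rw [parkStep_Icc_of_lt (by omega)] at hs
    cases hs
    have hbm : b = m + 2 := by
      by_contra hbm
      have hsub : insert a (Finset.Icc 1 m) ⊆ (Finset.Icc 1 n).erase (m + 1) := by
        intro x
        simp
        omega
      have hbig : ∀ c ∈ b :: t, m + 1 + 1 < c ∧ c ≤ n := by
        intro c hc
        refine ⟨?_, (hl c (List.mem_cons_of_mem _ hc)).2⟩
        rcases List.mem_cons.1 hc with rfl | hc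
        · omega
        · have := hbt c hc
          omega
      have := card_add_length_lt_of_isSome (by omega) (by omega) hsub hbig hrest
      rw [Finset.card_insert_of_notMem (by simp; omega)] at this
      simp at this
      omega
    obtain rfl : a = m + 2 := by omega
    subst hbm
    obtain ⟨s, hs, hrest⟩ := parkAssign_cons_isSome.1 hrest
    rw [parkStep_insert_Icc] at hs
    cases hs
    rw [insert_insert_Icc_one] at hrest
    exact .inr ⟨t, ih (by omega) (by omega) (List.pairwise_cons.1 htail).2
      (fun c hc => hl c (by simp [hc])) hrest, rfl⟩

theorem prefList_injective (m n : ℕ) : Function.Injective (prefList (m := m) (n := n)) := by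
  intro α β h
  funext i
  have := congrFun (List.ofFn_injective h) i
  simpa [Fin.ext_iff] using this

theorem image_prefList_VPFup (n : ℕ) : (VPFup n).image prefList = fillingLists n 0 := by
  ext l
  simp only [Finset.mem_image, VPFup, VPF, VPFk, Finset.mem_filter, Finset.mem_univ, true_and]
  constructor
  · rintro ⟨α, ⟨hpark, hmono⟩, rfl⟩
    refine mem_fillingLists_of_parkAssign_isSome (n := n) (by omega) (by simp [prefList]) ?_ ?_
      (by simpa using hpark)
    · rw [prefList, List.pairwise_ofFn]
      intro i j hij
      have := hmono i j hij.le
      simpa using this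
    · intro a ha
      obtain ⟨i, rfl⟩ := List.mem_ofFn.1 ha
      omega
  · intro hl
    obtain ⟨hlen, hsort, hbound⟩ := of_mem_fillingLists hl
    have hpark := parkAssign_isSome_of_mem_fillingLists (n := n) (by omega) hl
    subst hlen
    have hget : ∀ i : Fin l.length, 1 ≤ l.get i ∧ l.get i ≤ l.length := fun i => by
      have := hbound _ (List.get_mem l i)
      omega
    have heq : prefList (fun i => (⟨l.get i - 1, by have := hget i; omega⟩ : Fin l.length)) = l := by
      conv_rhs => rw [← List.ofFn_get l]
      rw [prefList]
      congr 1
      funext i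
      have := hget i
      simp only
      omega
    refine ⟨_, ⟨by rw [heq]; simpa using hpark, fun i j hij => ?_⟩, heq⟩
    rw [Fin.mk_le_mk]
    exact Nat.sub_le_sub_right (hsort.sortedLE.monotone_get hij) 1

theorem shiftedPell_add_succ (p : ℕ → ℕ) (hp2 : p 2 = 3)
    (hp3 : p 3 = 7) (hp : ∀ n : ℕ, 3 ≤ n → p n = 2 * p (n-1) + p (n-2)) (r : ℕ) :
    shiftedPell (r + 1) + shiftedPell r = p (r + 2) := by
  induction r using Nat.twoStepInduction with
  | zero => simp [shiftedPell, hp2]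
  | one => simp [shiftedPell, hp3]
  | more r ih ih' =>
    rw [hp (r + 2 + 2) (by omega), show r + 2 + 2 - 1 = r + 1 + 2 by omega,
      show r + 2 + 2 - 2 = r + 2 by omega, ← ih, ← ih']
    simp only [shiftedPell]
    ring

/-- If `p` is the sequence of numerators of the convergents of the
continued fraction `√2 = [1;2,2,2,…]` (so `p 1 = 1`, `p 2 = 3`, and
`p n = 2·p (n-1) + p (n-2)` for `n ≥ 3`), then `|VPF_n^↑| = p n` for all `n ≥ 1`. -/
theorem vpfup_card_eq_sqrt_two_convergent_numerator (p : ℕ → ℕ)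
    (hp1 : p 1 = 1) (hp2 : p 2 = 3)
    (hp : ∀ n : ℕ, 3 ≤ n → p n = 2 * p (n-1) + p (n-2)) :
    ∀ n : ℕ, 1 ≤ n → (VPFup n).card = p n := by
  intro n hn
  rw [← Finset.card_image_of_injective _ (prefList_injective n n), image_prefList_VPFup]
  match n, hn with
  | 1, _ => simp [fillingLists, hp1]
  | r + 2, _ =>
    rw [card_fillingLists_add_two, card_fillingLists_succ, card_fillingLists_succ r 1]
    simpa using shiftedPell_add_succ p hp2 (by rw [hp 3 le_rfl]; simp [hp1, hp2]) hp r
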